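/- Let a ∈ (−1,1) and b > 1. There exists a constant C > 0 such that for every g ∈ X_{a,b} the function L[g] belongs to X_{a,b} and satisfies ‖L[g]‖_{X_{a,b}} ≤ C ‖g‖_{X_{a,b}}; in particular L is well defined on X_{a,b}. -/

import Mathlib

open MeasureTheory Real Set Filter

noncomputable def weight (a b x : ℝ) : ℝ := if x ≤ 1 then x ^ a else x ^ b

noncomputable def Xnorm (a b : ℝ) (g : ℝ → ℝ) : ℝ :=
  ∫ x in Ioi (0:ℝ), |g x| * weight a b x

def MemX (a b : ℝ) (g : ℝ → ℝ) : Prop :=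
  IntegrableOn (fun x => g x * weight a b x) (Ioi 0)

noncomputable def Kern (ε : ℝ) (W : ℝ → ℝ → ℝ) (x y : ℝ) : ℝ := 2 + ε * W x y

def GoodW (α : ℝ) (W : ℝ → ℝ → ℝ) : Prop :=
  ContinuousOn (fun p : ℝ × ℝ => W p.1 p.2) (Ioi 0 ×ˢ Ioi 0) ∧
  (∀ x y : ℝ, 0 < x → 0 < y → W x y = W y x) ∧
  (∀ l x y : ℝ, 0 < l → 0 < x → 0 < y → W (l * x) (l * y) = W x y) ∧
  (∀ x y : ℝ, 0 < x → 0 < y → 0 ≤ W x y ∧ W x y ≤ (x / y) ^ α + (y / x) ^ α)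

def IsProfile (K : ℝ → ℝ → ℝ) (φ : ℝ → ℝ) : Prop :=
  LocallyIntegrableOn φ (Ioi 0) ∧
  (∀ᵐ x ∂(volume.restrict (Ioi (0:ℝ))), 0 ≤ φ x) ∧
  IntegrableOn (fun x => x * φ x) (Ioi 0) ∧
  (∀ᵐ x ∂(volume.restrict (Ioi (0:ℝ))),
    x ^ 2 * φ x = ∫ y in Ioo 0 x, ∫ z in Ioi (x - y), y * K y z * φ y * φ z)

def IsNormalised (φ : ℝ → ℝ) : Prop := ∫ x in Ioi (0:ℝ), x * φ x = 1

noncomputable def Lop (g : ℝ → ℝ) (x : ℝ) : ℝ :=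
  g x - (2 / x ^ 2) *
    ∫ y in Ioo 0 x, ∫ z in Ioi (x - y), (y * exp (-y) * g z + y * g y * exp (-z))

lemma lint_le {S : Set ℝ} (hS : MeasurableSet S) {f φ : ℝ → ℝ} (hf : ∀ x ∈ S, f x ≤ φ x)
    (hφ : IntegrableOn φ S) (h0 : ∀ x ∈ S, 0 ≤ φ x) :
    ∫⁻ x in S, ENNReal.ofReal (f x) ≤ ENNReal.ofReal (∫ x in S, φ x) := by
  rw [ofReal_integral_eq_lintegral_ofReal hφ
    ((ae_restrict_iff' hS).2 (Eventually.of_forall h0))]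
  exact setLIntegral_mono' hS (fun x hx => ENNReal.ofReal_le_ofReal (hf x hx))

lemma weight_meas (a b : ℝ) : Measurable (weight a b) := by
  unfold weight
  exact Measurable.ite measurableSet_Iic (by fun_prop) (by fun_prop)

lemma weight_pos (a b : ℝ) {x : ℝ} (hx : 0 < x) : 0 < weight a b x := by
  unfold weight
  split_ifs <;> positivity

lemma rpow_le_weight {a b c z : ℝ} (h1 : a ≤ c) (h2 : c ≤ b) (hz : 0 < z) :
    z ^ c ≤ weight a b z := by
  unfold weight
  split_ifs with h
  · exact rpow_le_rpow_of_exponent_ge hz h h1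
  · exact rpow_le_rpow_of_exponent_le (by linarith) h2

lemma weight_le_add {a b z : ℝ} (hz : 0 < z) :
    weight a b z * (2 / z ^ 2) ≤ 2 * z ^ (a - 2) + 2 * z ^ (b - 2) := by
  have e : ∀ p : ℝ, z ^ (p - 2) = z ^ p / z ^ 2 := fun p => by
    rw [rpow_sub hz]; norm_num
  rw [e, e]
  have h1 : weight a b z ≤ z ^ a + z ^ b := by
    unfold weight
    have := rpow_pos_of_pos hz a
    have := rpow_pos_of_pos hz b
    split_ifs <;> linarith
  have : 0 < z ^ 2 := by positivity
  calc weight a b z * (2 / z ^ 2) ≤ (z ^ a + z ^ b) * (2 / z ^ 2) := by gcongr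
    _ = _ := by ring

lemma pow_b {b y t : ℝ} (hb : 1 < b) (hy : 0 < y) (ht : 0 < t) :
    (y + t) ^ (b - 2) ≤ 2 ^ b * (t ^ (b - 2) + 1 + y ^ (b - 1)) := by
  have h2 : (1:ℝ) ≤ 2 ^ b := one_le_rpow (by norm_num) (by linarith)
  have ht' := rpow_pos_of_pos ht (b - 2)
  have hy' := rpow_pos_of_pos hy (b - 1)
  rcases le_total b 2 with h | h
  · have : (y + t) ^ (b - 2) ≤ t ^ (b - 2) :=
      rpow_le_rpow_of_nonpos ht (by linarith) (by linarith)
    nlinarith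
  · have h3 : (2:ℝ) ^ (b - 2) ≤ 2 ^ b := rpow_le_rpow_of_exponent_le (by norm_num) (by linarith)
    rcases le_total y t with hyt | hyt
    · have h4 : (y + t) ^ (b - 2) ≤ (2 * t) ^ (b - 2) :=
        rpow_le_rpow (by linarith) (by linarith) (by linarith)
      rw [mul_rpow (by norm_num) ht.le] at h4
      calc _ ≤ _ := h4
        _ ≤ _ := by gcongr; linarith
    · have h4 : (y + t) ^ (b - 2) ≤ (2 * y) ^ (b - 2) :=
        rpow_le_rpow (by linarith) (by linarith) (by linarith)
      rw [mul_rpow (by norm_num) hy.le] at h4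
      have h5 : y ^ (b - 2) ≤ 1 + y ^ (b - 1) := by
        rcases le_total y 1 with h1 | h1
        · have := rpow_le_one hy.le h1 (show 0 ≤ b - 2 by linarith)
          linarith
        · have := rpow_le_rpow_of_exponent_le h1 (show b - 2 ≤ b - 1 by linarith)
          linarith
      calc _ ≤ _ := h4
        _ ≤ _ := by gcongr; linarith

lemma pow_a {a y t : ℝ} (ha1 : a < 1) (hy : 0 < y) (ht : 0 < t) :
    y * (y + t) ^ (a - 2) ≤ t ^ ((1 + a) / 2 - 1) * y ^ ((1 + a) / 2 - 1) := by
  have h1 : (y + t) ^ (a - 2) = (y + t) ^ ((1 + a) / 2 - 1) * (y + t) ^ ((1 + a) / 2 - 2) := by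
    rw [← rpow_add (by linarith)]; ring_nf
  have h2 : y ^ ((1 + a) / 2 - 1) = y * y ^ ((1 + a) / 2 - 2) := by
    nth_rewrite 2 [← rpow_one y]
    rw [← rpow_add hy]; ring_nf
  have h3 : (y + t) ^ ((1 + a) / 2 - 1) ≤ t ^ ((1 + a) / 2 - 1) :=
    rpow_le_rpow_of_nonpos ht (by linarith) (by linarith)
  have h4 : (y + t) ^ ((1 + a) / 2 - 2) ≤ y ^ ((1 + a) / 2 - 2) :=
    rpow_le_rpow_of_nonpos hy (by linarith) (by linarith)
  rw [h1, h2]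
  calc _ ≤ y * (t ^ ((1 + a) / 2 - 1) * y ^ ((1 + a) / 2 - 2)) := by gcongr
    _ = _ := by ring

lemma gam {s : ℝ} (hs : 0 < s) (c : ℝ) :
    IntegrableOn (fun y : ℝ => c * (exp (-y) * y ^ (s - 1))) (Ioi 0) ∧
    ∫ y in Ioi (0:ℝ), c * (exp (-y) * y ^ (s - 1)) = c * Gamma s := by
  refine ⟨(GammaIntegral_convergent hs).const_mul c, ?_⟩
  rw [integral_const_mul, Gamma_eq_integral hs]

lemma powint {s : ℝ} (hs : 0 < s) {z : ℝ} (hz : 0 < z) (c : ℝ) :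
    IntegrableOn (fun t : ℝ => c * t ^ (s - 1)) (Ioo 0 z) ∧
    ∫ t in Ioo 0 z, c * t ^ (s - 1) = c * (z ^ s / s) := by
  constructor
  · have := (intervalIntegral.intervalIntegrable_rpow' (a := 0) (b := z)
      (show -1 < s - 1 by linarith))
    rw [intervalIntegrable_iff_integrableOn_Ioo_of_le hz.le] at this
    exact this.const_mul c
  · rw [integral_const_mul, ← integral_Ioc_eq_integral_Ioo,
      ← intervalIntegral.integral_of_le hz.le, integral_rpow (Or.inl (by linarith))]
    simp [zero_rpow hs.ne']

lemma k1_inner {a b : ℝ} (ha : -1 < a) (ha1 : a < 1) (hb : 1 < b) {t : ℝ} (ht : 0 < t) :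
    ∫⁻ y in Ioi (0:ℝ), ENNReal.ofReal (weight a b (y + t) * (2 / (y + t) ^ 2) * (y * exp (-y))) ≤
    ENNReal.ofReal (2 * Gamma ((1 + a) / 2) * t ^ ((1 + a) / 2 - 1) +
      2 * 2 ^ b * (Gamma b + Gamma 2) * t ^ ((1:ℝ) - 1) +
      2 * 2 ^ b * Gamma 2 * t ^ (b - 1)) := by
  obtain ⟨i1, e1⟩ := gam (show 0 < (1 + a) / 2 by linarith) (2 * t ^ ((1 + a) / 2 - 1))
  obtain ⟨i2, e2⟩ := gam (show 0 < b by linarith) (2 * 2 ^ b)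
  obtain ⟨i3, e3⟩ := gam (show (0:ℝ) < 2 by norm_num) (2 * 2 ^ b * (1 + t ^ (b - 1)))
  refine (lint_le measurableSet_Ioi ?_ ((i1.add i2).add i3) ?_).trans ?_
  · intro y hy
    have hy : 0 < y := hy
    have h1 := weight_le_add (a := a) (b := b) (show 0 < y + t by linarith)
    have h2 := pow_a ha1 hy ht
    have h3 := pow_b hb ht hy
    rw [add_comm t y] at h3
    have e : y ^ (b - 1) = y * y ^ (b - 2) := by
      nth_rewrite 2 [← rpow_one y]
      rw [← rpow_add hy]; ring_nf
    have e' : y ^ ((2:ℝ) - 1) = y := by norm_num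
    simp only [Pi.add_apply]
    rw [e, e']
    have hE := exp_pos (-y)
    calc _ ≤ (2 * (y + t) ^ (a - 2) + 2 * (y + t) ^ (b - 2)) * (y * exp (-y)) := by gcongr
      _ = 2 * exp (-y) * (y * (y + t) ^ (a - 2)) + 2 * exp (-y) * y * (y + t) ^ (b - 2) := by ring
      _ ≤ 2 * exp (-y) * (t ^ ((1 + a) / 2 - 1) * y ^ ((1 + a) / 2 - 1)) +
          2 * exp (-y) * y * (2 ^ b * (y ^ (b - 2) + 1 + t ^ (b - 1))) := by gcongr
      _ = _ := by ring
  · intro y hy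
    have hy : 0 < y := hy
    simp only [Pi.add_apply]
    positivity
  · apply ENNReal.ofReal_le_ofReal
    rw [integral_add' (i1.add i2) i3]
    rw [integral_add' i1 i2, e1, e2, e3]
    apply le_of_eq
    norm_num
    ring

lemma k1 {a b : ℝ} (ha : -1 < a) (ha1 : a < 1) (hb : 1 < b) :
    ∃ C : ℝ, 0 ≤ C ∧ ∀ z : ℝ, 0 < z →
    ∫⁻ t in Ioo 0 z, ∫⁻ y in Ioi (0:ℝ),
      ENNReal.ofReal (weight a b (y + t) * (2 / (y + t) ^ 2) * (y * exp (-y))) ≤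
    ENNReal.ofReal (C * weight a b z) := by
  have g1 := Gamma_pos_of_pos (show 0 < (1 + a) / 2 by linarith)
  have g2 := Gamma_pos_of_pos (show 0 < b by linarith)
  have g3 := Gamma_pos_of_pos (show (0:ℝ) < 2 by norm_num)
  have hc : 0 < (1 + a) / 2 := by linarith
  have hb0 : 0 < b := by linarith
  refine ⟨2 * Gamma ((1 + a) / 2) / ((1 + a) / 2) + 2 * 2 ^ b * (Gamma b + Gamma 2) +
     2 * 2 ^ b * Gamma 2 / b, by positivity, fun z hz => ?_⟩
  obtain ⟨i1, e1⟩ := powint hc hz (2 * Gamma ((1 + a) / 2))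
  obtain ⟨i2, e2⟩ := powint one_pos hz (2 * 2 ^ b * (Gamma b + Gamma 2))
  obtain ⟨i3, e3⟩ := powint hb0 hz (2 * 2 ^ b * Gamma 2)
  refine (setLIntegral_mono' measurableSet_Ioo
    (fun t ht => k1_inner ha ha1 hb ht.1)).trans ?_
  refine (lint_le measurableSet_Ioo (fun t _ => le_rfl) ((i1.add i2).add i3) ?_).trans ?_
  · intro t ht
    have ht : 0 < t := ht.1
    simp only [Pi.add_apply]
    positivity
  · apply ENNReal.ofReal_le_ofReal
    rw [integral_add' (i1.add i2) i3]
    rw [integral_add' i1 i2, e1, e2, e3]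
    have w1 := rpow_le_weight (a := a) (b := b) (c := (1 + a) / 2) (by linarith) (by linarith) hz
    have w2 := rpow_le_weight (a := a) (b := b) (c := 1) (by linarith) (by linarith) hz
    have w3 := rpow_le_weight (a := a) (b := b) (c := b) (by linarith) (by linarith) hz
    calc _ = 2 * Gamma ((1 + a) / 2) / ((1 + a) / 2) * z ^ ((1 + a) / 2) +
        2 * 2 ^ b * (Gamma b + Gamma 2) * z ^ (1:ℝ) + 2 * 2 ^ b * Gamma 2 / b * z ^ b := by
          field_simp
      _ ≤ 2 * Gamma ((1 + a) / 2) / ((1 + a) / 2) * weight a b z +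
        2 * 2 ^ b * (Gamma b + Gamma 2) * weight a b z
          + 2 * 2 ^ b * Gamma 2 / b * weight a b z := by gcongr
      _ = _ := by ring

lemma tail {a y : ℝ} (ha1 : a < 1) (hy : 0 < y) :
    IntegrableOn (fun t : ℝ => (y + t) ^ (a - 2)) (Ioi 0) ∧
    ∫ t in Ioi (0:ℝ), (y + t) ^ (a - 2) = y ^ (a - 1) / (1 - a) := by
  have h1 := integrableOn_Ioi_rpow_of_lt (show a - 2 < -1 by linarith) hy
  have h2 := integral_Ioi_rpow_of_lt (show a - 2 < -1 by linarith) hy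
  have mp := measurePreserving_add_left (volume : Measure ℝ) y
  have me : MeasurableEmbedding (fun t : ℝ => y + t) := measurableEmbedding_addLeft y
  have hpre : (fun t : ℝ => y + t) ⁻¹' (Ioi y) = Ioi 0 := by ext t; simp
  constructor
  · have := (mp.integrableOn_comp_preimage me (f := fun t : ℝ => t ^ (a - 2)) (s := Ioi y)).2 h1
    rw [hpre] at this
    exact this
  · have := mp.setIntegral_preimage_emb me (fun t : ℝ => t ^ (a - 2)) (Ioi y)
    rw [hpre] at this
    rw [this, h2, show a - 2 + 1 = -(1 - a) by ring, neg_div_neg_eq]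
    ring_nf

lemma k2 {a b : ℝ} (ha1 : a < 1) (hb : 1 < b) :
    ∃ C : ℝ, 0 ≤ C ∧ ∀ y : ℝ, 0 < y →
    ∫⁻ t in Ioi (0:ℝ),
      ENNReal.ofReal (weight a b (y + t) * (2 / (y + t) ^ 2) * (y * exp (-t))) ≤
    ENNReal.ofReal (C * weight a b y) := by
  have g1 := Gamma_pos_of_pos (show 0 < b - 1 by linarith)
  have g3 := Gamma_pos_of_pos (show (0:ℝ) < 1 by norm_num)
  have ha' : 0 < 1 - a := by linarith
  refine ⟨2 / (1 - a) + 2 * 2 ^ b * Gamma (b - 1) + 2 * 2 ^ b * Gamma 1 + 2 * 2 ^ b * Gamma 1,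
    by positivity, fun y hy => ?_⟩
  obtain ⟨i1, e1⟩ := tail ha1 hy
  replace i1 := i1.const_mul (2 * y)
  obtain ⟨i2, e2⟩ := gam (show 0 < b - 1 by linarith) (2 * 2 ^ b * y)
  obtain ⟨i3, e3⟩ := gam (show (0:ℝ) < 1 by norm_num) (2 * 2 ^ b * (y + y ^ b))
  have eb : y ^ b = y * y ^ (b - 1) := by
    nth_rewrite 2 [← rpow_one y]
    rw [← rpow_add hy]; ring_nf
  have ea : y ^ a = y * y ^ (a - 1) := by
    nth_rewrite 2 [← rpow_one y]
    rw [← rpow_add hy]; ring_nf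
  refine (lint_le measurableSet_Ioi ?_ ((i1.add i2).add i3) ?_).trans ?_
  · intro t ht
    have ht : 0 < t := ht
    have h1 := weight_le_add (a := a) (b := b) (show 0 < y + t by linarith)
    have h3 := pow_b hb hy ht
    have e' : t ^ ((1:ℝ) - 1) = 1 := by norm_num
    simp only [Pi.add_apply]
    rw [eb, e', show b - 1 - 1 = b - 2 by ring]
    have hE := exp_pos (-t)
    have hE1 : exp (-t) ≤ 1 := exp_le_one_iff.2 (by linarith)
    calc _ ≤ (2 * (y + t) ^ (a - 2) + 2 * (y + t) ^ (b - 2)) * (y * exp (-t)) := by gcongr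
      _ = 2 * y * (y + t) ^ (a - 2) * exp (-t) + 2 * exp (-t) * y * (y + t) ^ (b - 2) := by ring
      _ ≤ 2 * y * (y + t) ^ (a - 2) * 1 +
          2 * exp (-t) * y * (2 ^ b * (t ^ (b - 2) + 1 + y ^ (b - 1))) := by gcongr
      _ = _ := by ring
  · intro t ht
    have ht : 0 < t := ht
    simp only [Pi.add_apply]
    positivity
  · apply ENNReal.ofReal_le_ofReal
    rw [integral_add' (i1.add i2) i3]
    rw [integral_add' i1 i2, e2, e3, integral_const_mul, e1]
    have w1 := rpow_le_weight (a := a) (b := b) (c := a) (by linarith) (by linarith) hy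
    have w2 := rpow_le_weight (a := a) (b := b) (c := 1) (by linarith) (by linarith) hy
    have w3 := rpow_le_weight (a := a) (b := b) (c := b) (by linarith) (by linarith) hy
    rw [rpow_one] at w2
    calc _ = 2 / (1 - a) * y ^ a + 2 * 2 ^ b * Gamma (b - 1) * y + 2 * 2 ^ b * Gamma 1 * y
          + 2 * 2 ^ b * Gamma 1 * y ^ b := by
          rw [ea]; ring
      _ ≤ 2 / (1 - a) * weight a b y + 2 * 2 ^ b * Gamma (b - 1) * weight a b y
         + 2 * 2 ^ b * Gamma 1 * weight a b y
          + 2 * 2 ^ b * Gamma 1 * weight a b y := by gcongr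
      _ = _ := by ring

open scoped ENNReal

lemma tonelliA {F : ℝ → ℝ → ℝ≥0∞} (hF : Measurable (Function.uncurry F)) :
    ∫⁻ x in Ioi (0:ℝ), ∫⁻ y in Ioo 0 x, F y (x - y) =
    ∫⁻ y in Ioi (0:ℝ), ∫⁻ t in Ioi (0:ℝ), F y t := by
  let G : ℝ → ℝ → ℝ≥0∞ := fun y t =>
    ((Ioi (0:ℝ)) ×ˢ (Ioi (0:ℝ))).indicator (Function.uncurry F) (y, t)
  have hG : Measurable (Function.uncurry G) :=
    hF.indicator (measurableSet_Ioi.prod measurableSet_Ioi)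
  have hR : ∫⁻ y in Ioi (0:ℝ), ∫⁻ t in Ioi (0:ℝ), F y t = ∫⁻ y, ∫⁻ t, G y t := by
    rw [← lintegral_indicator measurableSet_Ioi]
    congr 1; ext y
    by_cases hy : 0 < y
    · rw [indicator_of_mem (show y ∈ Ioi 0 from hy), ← lintegral_indicator measurableSet_Ioi]
      congr 1; ext t
      by_cases ht : 0 < t <;> simp [G, indicator, hy, ht]
    · rw [indicator_of_notMem (show y ∉ Ioi 0 from hy)]
      simp [G, indicator, hy]
  have hL : ∫⁻ x in Ioi (0:ℝ), ∫⁻ y in Ioo 0 x, F y (x - y) = ∫⁻ x, ∫⁻ y, G y (x - y) := by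
    rw [← lintegral_indicator measurableSet_Ioi]
    congr 1; ext x
    by_cases hx : 0 < x
    · rw [indicator_of_mem (show x ∈ Ioi 0 from hx), ← lintegral_indicator measurableSet_Ioo]
      congr 1; ext y
      simp [G, indicator]
    · rw [indicator_of_notMem (show x ∉ Ioi 0 from hx)]
      symm
      rw [lintegral_eq_zero_of_ae_eq_zero]
      refine Eventually.of_forall fun y => ?_
      simp only [G]
      rw [indicator_of_notMem]
      · rfl
      · simp only [mem_prod, mem_Ioi, not_and, not_lt]
        intro hy
        linarith
  rw [hR, hL, lintegral_lintegral_swap]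
  · congr 1; ext y
    exact lintegral_sub_right_eq_self (fun t => G y t) y
  · exact (hG.comp (measurable_snd.prodMk (measurable_fst.sub measurable_snd))).aemeasurable

lemma tonelliB {P : ℝ → ℝ → ℝ≥0∞} (hP : Measurable (Function.uncurry P)) :
    ∫⁻ t in Ioi (0:ℝ), ∫⁻ z in Ioi t, P t z =
    ∫⁻ z in Ioi (0:ℝ), ∫⁻ t in Ioo 0 z, P t z := by
  have h := tonelliA (F := fun t s => P t (s + t))
    (hP.comp (measurable_fst.prodMk (measurable_snd.add measurable_fst)))
  simp only [sub_add_cancel] at h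
  rw [h]
  congr 1; ext t
  rw [← lintegral_indicator measurableSet_Ioi, ← lintegral_indicator measurableSet_Ioi,
    ← lintegral_add_right_eq_self _ t]
  congr 1; ext s
  simp [indicator]

lemma main_est {a b : ℝ} (ha : -1 < a) (ha1 : a < 1) (hb : 1 < b) :
    ∃ C : ℝ, 0 ≤ C ∧ ∀ h : ℝ → ℝ≥0∞, Measurable h →
    ∫⁻ x in Ioi (0:ℝ), ENNReal.ofReal (weight a b x * (2 / x ^ 2)) *
      ∫⁻ y in Ioo 0 x, ∫⁻ z in Ioi (x - y),
        (ENNReal.ofReal (y * exp (-y)) * h z + ENNReal.ofReal y * h y * ENNReal.ofReal (exp (-z)))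
    ≤ ENNReal.ofReal C * ∫⁻ x in Ioi (0:ℝ), h x * ENNReal.ofReal (weight a b x) := by
  obtain ⟨C1, hC1, H1⟩ := k1 ha ha1 hb
  obtain ⟨C2, hC2, H2⟩ := k2 ha1 hb
  refine ⟨C1 + C2, by positivity, fun h hh => ?_⟩
  have hw := weight_meas a b
  let W : ℝ → ℝ≥0∞ := fun x => ENNReal.ofReal (weight a b x * (2 / x ^ 2))
  have hW : Measurable W := by fun_prop
  have hT : Measurable (fun t => ∫⁻ z in Ioi t, h z) := by
    have e : (fun t => ∫⁻ z in Ioi t, h z) =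
        fun t => ∫⁻ z, {p : ℝ × ℝ | p.1 < p.2}.indicator (fun p => h p.2) (t, z) := by
      ext t
      rw [← lintegral_indicator measurableSet_Ioi]
      congr 1
    rw [e]
    refine Measurable.lintegral_prod_right
      (f := fun t z => {p : ℝ × ℝ | p.1 < p.2}.indicator (fun p => h p.2) (t, z)) ?_
    exact (hh.comp measurable_snd).indicator (measurableSet_lt measurable_fst measurable_snd)
  have hexp : ∀ t : ℝ, ∫⁻ z in Ioi t, ENNReal.ofReal (exp (-z)) = ENNReal.ofReal (exp (-t)) := by
    intro t
    rw [← ofReal_integral_eq_lintegral_ofReal (integrableOn_exp_neg_Ioi t)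
      (Eventually.of_forall fun z => (exp_pos _).le), integral_exp_neg_Ioi]
  have hin : ∀ y t : ℝ, ∫⁻ z in Ioi t, (ENNReal.ofReal (y * exp (-y)) * h z +
      ENNReal.ofReal y * h y * ENNReal.ofReal (exp (-z))) =
      ENNReal.ofReal (y * exp (-y)) * (∫⁻ z in Ioi t, h z) +
        ENNReal.ofReal y * h y * ENNReal.ofReal (exp (-t)) := by
    intro y t
    rw [lintegral_add_left (by fun_prop), lintegral_const_mul _ hh,
      lintegral_const_mul _ (by fun_prop), hexp]
  simp only [hin]
  let F1 : ℝ → ℝ → ℝ≥0∞ := fun y t =>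
    W (y + t) * ENNReal.ofReal (y * exp (-y)) * (∫⁻ z in Ioi t, h z)
  let F2 : ℝ → ℝ → ℝ≥0∞ := fun y t =>
    h y * (W (y + t) * (ENNReal.ofReal y * ENNReal.ofReal (exp (-t))))
  have hF1 : Measurable (Function.uncurry F1) := by
    have : Measurable (fun p : ℝ × ℝ => ∫⁻ z in Ioi p.2, h z) := hT.comp measurable_snd
    have h2 : Measurable (fun p : ℝ × ℝ => W (p.1 + p.2) * ENNReal.ofReal (p.1 * exp (-p.1))) := by
      fun_prop
    exact h2.mul this
  have hF2 : Measurable (Function.uncurry F2) := by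
    simp only [F2, Function.uncurry_def]
    fun_prop
  have hF : Measurable (Function.uncurry fun y t => F1 y t + F2 y t) := hF1.add hF2
  have step1 : ∫⁻ x in Ioi (0:ℝ), ENNReal.ofReal (weight a b x * (2 / x ^ 2)) *
      ∫⁻ y in Ioo 0 x, (ENNReal.ofReal (y * exp (-y)) * (∫⁻ z in Ioi (x - y), h z) +
        ENNReal.ofReal y * h y * ENNReal.ofReal (exp (-(x - y)))) =
      ∫⁻ x in Ioi (0:ℝ), ∫⁻ y in Ioo 0 x, (F1 y (x - y) + F2 y (x - y)) := by
    congr 1; ext x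
    rw [← lintegral_const_mul' _ _ ENNReal.ofReal_ne_top]
    congr 1; ext y
    simp only [F1, F2, W, add_sub_cancel]
    ring
  rw [step1, tonelliA hF]
  have step2 : ∫⁻ y in Ioi (0:ℝ), ∫⁻ t in Ioi (0:ℝ), (F1 y t + F2 y t) =
      (∫⁻ y in Ioi (0:ℝ), ∫⁻ t in Ioi (0:ℝ), F1 y t) +
      ∫⁻ y in Ioi (0:ℝ), ∫⁻ t in Ioi (0:ℝ), F2 y t := by
    rw [← lintegral_add_left hF1.lintegral_prod_right]
    congr 1; ext y
    exact lintegral_add_left (hF1.comp measurable_prodMk_left) _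
  rw [step2, ENNReal.ofReal_add hC1 hC2, add_mul]
  refine add_le_add ?_ ?_
  · rw [lintegral_lintegral_swap hF1.aemeasurable]
    have hk : Measurable (fun t => ∫⁻ y in Ioi (0:ℝ), W (y + t) * ENNReal.ofReal (y * exp (-y))) := by
      refine Measurable.lintegral_prod_right
        (f := fun t y => W (y + t) * ENNReal.ofReal (y * exp (-y))) ?_
      simp only [Function.uncurry_def]
      fun_prop
    have e1 : ∀ t, ∫⁻ y in Ioi (0:ℝ), F1 y t = ∫⁻ z in Ioi t,
        (∫⁻ y in Ioi (0:ℝ), W (y + t) * ENNReal.ofReal (y * exp (-y))) * h z := by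
      intro t
      simp only [F1]
      rw [lintegral_mul_const _ (by fun_prop), lintegral_const_mul _ hh]
    simp only [e1]
    rw [tonelliB (P := fun t z =>
      (∫⁻ y in Ioi (0:ℝ), W (y + t) * ENNReal.ofReal (y * exp (-y))) * h z)
      ((hk.comp measurable_fst).mul (hh.comp measurable_snd)),
      ← lintegral_const_mul' _ _ ENNReal.ofReal_ne_top]
    refine setLIntegral_mono' measurableSet_Ioi fun z hz => ?_
    have hz : 0 < z := hz
    rw [lintegral_mul_const _ hk]
    have e2 : ∫⁻ t in Ioo 0 z, ∫⁻ y in Ioi (0:ℝ), W (y + t) * ENNReal.ofReal (y * exp (-y)) =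
      ∫⁻ t in Ioo 0 z, ∫⁻ y in Ioi (0:ℝ),
      ENNReal.ofReal (weight a b (y + t) * (2 / (y + t) ^ 2) * (y * exp (-y))) := by
      refine setLIntegral_congr_fun measurableSet_Ioo fun t ht => ?_
      refine setLIntegral_congr_fun measurableSet_Ioi fun y hy => ?_
      have hp : 0 < y + t := add_pos hy ht.1
      have := weight_pos a b hp
      simp only [W]
      rw [← ENNReal.ofReal_mul (by positivity)]
    rw [e2]
    calc _ ≤ ENNReal.ofReal (C1 * weight a b z) * h z := by gcongr; exact H1 z hz
      _ = _ := by rw [ENNReal.ofReal_mul hC1]; ring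
  · rw [← lintegral_const_mul' _ _ ENNReal.ofReal_ne_top]
    refine setLIntegral_mono' measurableSet_Ioi fun y hy => ?_
    have hy : 0 < y := hy
    simp only [F2]
    rw [lintegral_const_mul _ (by fun_prop)]
    have e2 : ∫⁻ t in Ioi (0:ℝ), W (y + t) * (ENNReal.ofReal y * ENNReal.ofReal (exp (-t))) =
      ∫⁻ t in Ioi (0:ℝ),
      ENNReal.ofReal (weight a b (y + t) * (2 / (y + t) ^ 2) * (y * exp (-t))) := by
      refine setLIntegral_congr_fun measurableSet_Ioi fun t ht => ?_
      have hp : 0 < y + t := add_pos hy ht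
      have := weight_pos a b hp
      simp only [W]
      rw [← ENNReal.ofReal_mul hy.le, ← ENNReal.ofReal_mul (by positivity)]
    rw [e2]
    calc _ ≤ h y * ENNReal.ofReal (C2 * weight a b y) := by gcongr; exact H2 y hy
      _ = _ := by rw [ENNReal.ofReal_mul hC2]; ring

lemma Lop_congr {g g' : ℝ → ℝ} (h : g =ᵐ[volume.restrict (Ioi 0)] g') :
    Lop g =ᵐ[volume.restrict (Ioi 0)] Lop g' := by
  filter_upwards [h, ae_restrict_mem measurableSet_Ioi] with x hx hx0
  unfold Lop
  rw [hx]
  congr 2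
  have h1 : g =ᵐ[volume.restrict (Ioo 0 x)] g' :=
    ae_restrict_of_ae_restrict_of_subset (fun y hy => hy.1) h
  refine integral_congr_ae ?_
  filter_upwards [h1, ae_restrict_mem measurableSet_Ioo] with y hy hy0
  have h2 : g =ᵐ[volume.restrict (Ioi (x - y))] g' :=
    ae_restrict_of_ae_restrict_of_subset (fun z hz => by
      have := hy0.2
      have hz : x - y < z := hz
      show 0 < z
      linarith) h
  refine integral_congr_ae ?_
  filter_upwards [h2] with z hz
  rw [hy, hz]

lemma Lop_meas {g : ℝ → ℝ} (hg : Measurable g) : Measurable (Lop g) := by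
  let f : ℝ × ℝ → ℝ → ℝ := fun p z =>
    {q : (ℝ × ℝ) × ℝ | q.1.1 - q.1.2 < q.2}.indicator
      (fun q => q.1.2 * exp (-q.1.2) * g q.2 + q.1.2 * g q.1.2 * exp (-q.2)) (p, z)
  have hf : Measurable (Function.uncurry f) := by
    refine Measurable.indicator ?_ (measurableSet_lt (by fun_prop) (by fun_prop))
    fun_prop
  have hI : Measurable (fun p : ℝ × ℝ => ∫ z, f p z) :=
    (hf.stronglyMeasurable.integral_prod_right).measurable
  let k : ℝ → ℝ → ℝ := fun x y =>
    {p : ℝ × ℝ | 0 < p.2 ∧ p.2 < p.1}.indicator (fun p : ℝ × ℝ => ∫ z, f p z) (x, y)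
  have hk : Measurable (Function.uncurry k) := by
    refine hI.indicator ?_
    exact (measurableSet_lt measurable_const measurable_snd).inter
      (measurableSet_lt measurable_snd measurable_fst)
  have hJ : Measurable (fun x => ∫ y, k x y) :=
    (hk.stronglyMeasurable.integral_prod_right).measurable
  have e : Lop g = fun x => g x - (2 / x ^ 2) * ∫ y, k x y := by
    ext x
    unfold Lop
    congr 2
    rw [← integral_indicator measurableSet_Ioo]
    congr 1; ext y
    simp only [k, indicator, mem_Ioo, mem_ofPred_eq]
    split_ifs with h
    · rw [← integral_indicator measurableSet_Ioi]
      congr 1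
    · rfl
  rw [e]
  fun_prop

theorem stmt10 (a b : ℝ) (ha : a ∈ Ioo (-1:ℝ) 1) (hb : 1 < b) :
    ∃ C > (0:ℝ), ∀ g : ℝ → ℝ, MemX a b g →
      MemX a b (Lop g) ∧ Xnorm a b (Lop g) ≤ C * Xnorm a b g := by
  obtain ⟨C, hC, H⟩ := main_est ha.1 ha.2 hb
  have hw := weight_meas a b
  have key : ∀ g : ℝ → ℝ, Measurable g → MemX a b g →
      MemX a b (Lop g) ∧ Xnorm a b (Lop g) ≤ (1 + C) * Xnorm a b g := by
    intro g hg hm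
    have hL := Lop_meas hg
    have est : ∫⁻ x in Ioi (0:ℝ), ‖Lop g x * weight a b x‖ₑ ≤
        ENNReal.ofReal (1 + C) * ∫⁻ x in Ioi (0:ℝ), ‖g x * weight a b x‖ₑ := by
      have e0 : ∫⁻ x in Ioi (0:ℝ), ‖g x * weight a b x‖ₑ =
          ∫⁻ x in Ioi (0:ℝ), ‖g x‖ₑ * ENNReal.ofReal (weight a b x) := by
        refine setLIntegral_congr_fun measurableSet_Ioi fun x hx => ?_
        simp only [enorm_mul]
        rw [Real.enorm_of_nonneg (weight_pos a b hx).le]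
      rw [ENNReal.ofReal_add zero_le_one hC, add_mul, ENNReal.ofReal_one, one_mul]
      refine le_trans ?_ (add_le_add_right ((H (fun x => ‖g x‖ₑ) hg.enorm).trans_eq
        (by rw [e0])) _)
      rw [← lintegral_add_left (by fun_prop)]
      refine setLIntegral_mono' measurableSet_Ioi fun x hx => ?_
      have hx : 0 < x := hx
      have hwx := weight_pos a b hx
      have b1 : ‖∫ y in Ioo 0 x, ∫ z in Ioi (x - y),
          (y * exp (-y) * g z + y * g y * exp (-z))‖ₑ ≤
          ∫⁻ y in Ioo 0 x, ∫⁻ z in Ioi (x - y),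
        (ENNReal.ofReal (y * exp (-y)) * ‖g z‖ₑ +
          ENNReal.ofReal y * ‖g y‖ₑ * ENNReal.ofReal (exp (-z))) := by
        refine (enorm_integral_le_lintegral_enorm _).trans ?_
        refine setLIntegral_mono' measurableSet_Ioo fun y hy => ?_
        refine (enorm_integral_le_lintegral_enorm _).trans ?_
        refine lintegral_mono fun z => ?_
        have hy : 0 < y := hy.1
        refine (enorm_add_le _ _).trans (le_of_eq ?_)
        rw [enorm_mul, enorm_mul (y * g y), enorm_mul y (g y), Real.enorm_of_nonneg hy.le,
          Real.enorm_of_nonneg (exp_pos _).le, Real.enorm_of_nonneg (by positivity)]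
      rw [enorm_mul, enorm_mul]
      unfold Lop
      calc _ ≤ (‖g x‖ₑ + ‖(2 / x ^ 2) * ∫ y in Ioo 0 x, ∫ z in Ioi (x - y),
          (y * exp (-y) * g z + y * g y * exp (-z))‖ₑ) * ‖weight a b x‖ₑ := by
            gcongr
            exact enorm_sub_le
        _ = ‖g x‖ₑ * ‖weight a b x‖ₑ + ENNReal.ofReal (weight a b x * (2 / x ^ 2)) *
            ‖∫ y in Ioo 0 x, ∫ z in Ioi (x - y),
          (y * exp (-y) * g z + y * g y * exp (-z))‖ₑ := by
            rw [enorm_mul, ENNReal.ofReal_mul hwx.le, Real.enorm_of_nonneg hwx.le,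
              Real.enorm_of_nonneg (show 0 ≤ 2 / x ^ 2 by positivity)]
            ring
        _ ≤ _ := by gcongr
    have hfin : ∫⁻ x in Ioi (0:ℝ), ‖g x * weight a b x‖ₑ < ⊤ := hm.2
    have hrt : ENNReal.ofReal (1 + C) * ∫⁻ x in Ioi (0:ℝ), ‖g x * weight a b x‖ₑ < ⊤ :=
      ENNReal.mul_lt_top ENNReal.ofReal_lt_top hfin
    have hX : ∀ f : ℝ → ℝ, Measurable f →
        Xnorm a b f = (∫⁻ x in Ioi (0:ℝ), ‖f x * weight a b x‖ₑ).toReal := by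
      intro f hf
      rw [← integral_norm_eq_lintegral_enorm (f := fun x => f x * weight a b x) (hf.mul hw).aestronglyMeasurable]
      unfold Xnorm
      refine setIntegral_congr_fun measurableSet_Ioi fun x hx => ?_
      simp only [norm_mul, Real.norm_eq_abs]
      rw [abs_of_pos (weight_pos a b hx)]
    refine ⟨⟨(hL.mul hw).aestronglyMeasurable, est.trans_lt hrt⟩, ?_⟩
    rw [hX _ hL, hX _ hg]
    refine (ENNReal.toReal_mono hrt.ne est).trans_eq ?_
    rw [ENNReal.toReal_mul, ENNReal.toReal_ofReal (by positivity)]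
  refine ⟨1 + C, by positivity, fun g hm => ?_⟩
  obtain ⟨G, hG, hGe⟩ := hm.1
  let g' : ℝ → ℝ := fun x => G x / weight a b x
  have hg' : Measurable g' := hG.measurable.div hw
  have hgg : g =ᵐ[volume.restrict (Ioi 0)] g' := by
    filter_upwards [hGe, ae_restrict_mem measurableSet_Ioi] with x hx hx0
    have := (weight_pos a b hx0).ne'
    simp only [g', ← hx]
    field_simp
  have hLL := Lop_congr hgg
  have mcongr : ∀ u v : ℝ → ℝ, u =ᵐ[volume.restrict (Ioi 0)] v → MemX a b u → MemX a b v := by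
    intro u v huv hu
    refine Integrable.congr hu ?_
    filter_upwards [huv] with x hx
    rw [hx]
  have xcongr : ∀ u v : ℝ → ℝ, u =ᵐ[volume.restrict (Ioi 0)] v → Xnorm a b u = Xnorm a b v := by
    intro u v huv
    refine integral_congr_ae ?_
    filter_upwards [huv] with x hx
    rw [hx]
  obtain ⟨r1, r2⟩ := key g' hg' (mcongr _ _ hgg hm)
  refine ⟨mcongr _ _ hLL.symm r1, ?_⟩
  rw [xcongr _ _ hLL, xcongr _ _ hgg]
  exact r2
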